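/- arXiv:2304.00273 — 2 statements merged into one kernel-verified Lean document; each statement's English description precedes it below -/
import Mathlib

section
/- Let I be a minimal ideal of a finite-dimensional Zinbiel superalgebra Z over a field. Then I·Z = Z·I = 0 and dim I = 1. -/
open Module Submodule

/-- A Zinbiel superalgebra over a field `K`: a `K`-vector space `Z` with a bilinear
multiplication and a direct sum decomposition `Z = Z₀ ⊕ Z₁` such that
`Zᵢ·Zⱼ ⊆ Z_{i+j (mod 2)}` and, for all homogeneous `x, y, z`,
`(x·y)·z = x·(y·z + (−1)^{|y||z|} z·y)`. -/
structure ZinbielSuper (K : Type*) [Field K] (Z : Type*) [AddCommGroup Z] [Module K Z] where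
  mul : Z →ₗ[K] Z →ₗ[K] Z
  Z0 : Submodule K Z
  Z1 : Submodule K Z
  compl : IsCompl Z0 Z1
  mul00 : ∀ x ∈ Z0, ∀ y ∈ Z0, mul x y ∈ Z0
  mul01 : ∀ x ∈ Z0, ∀ y ∈ Z1, mul x y ∈ Z1
  mul10 : ∀ x ∈ Z1, ∀ y ∈ Z0, mul x y ∈ Z1
  mul11 : ∀ x ∈ Z1, ∀ y ∈ Z1, mul x y ∈ Z0
  zinb_even : ∀ x y z : Z, (x ∈ Z0 ∨ x ∈ Z1) → (y ∈ Z0 ∨ y ∈ Z1) → (z ∈ Z0 ∨ z ∈ Z1) →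
    (y ∈ Z0 ∨ z ∈ Z0) → mul (mul x y) z = mul x (mul y z + mul z y)
  zinb_odd : ∀ x y z : Z, (x ∈ Z0 ∨ x ∈ Z1) → y ∈ Z1 → z ∈ Z1 →
    mul (mul x y) z = mul x (mul y z - mul z y)

variable {K : Type*} [Field K] {Z : Type*} [AddCommGroup Z] [Module K Z]

/-- The linear span of all products `a·b` with `a ∈ A`, `b ∈ B`. -/
def mulSub (mul : Z →ₗ[K] Z →ₗ[K] Z) (A B : Submodule K Z) : Submodule K Z :=
  Submodule.span K {z : Z | ∃ a ∈ A, ∃ b ∈ B, mul a b = z}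

/-- `I` is a (two-sided) ideal of the Zinbiel superalgebra: `Z·I ⊆ I` and `I·Z ⊆ I`. -/
def IsIdeal (S : ZinbielSuper K Z) (I : Submodule K Z) : Prop :=
  ∀ x : Z, ∀ a ∈ I, S.mul x a ∈ I ∧ S.mul a x ∈ I

/-- `I` is a right ideal of the Zinbiel superalgebra: `I·Z ⊆ I`. -/
def IsRightIdeal (S : ZinbielSuper K Z) (I : Submodule K Z) : Prop :=
  ∀ a ∈ I, ∀ x : Z, S.mul a x ∈ I

/-- `I` is a minimal ideal: it is a nonzero ideal and the only ideals contained in it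
are `0` and itself. -/
def IsMinimalIdeal (S : ZinbielSuper K Z) (I : Submodule K Z) : Prop :=
  IsIdeal S I ∧ I ≠ ⊥ ∧ ∀ J : Submodule K Z, IsIdeal S J → J ≤ I → J = ⊥ ∨ J = I

/-- `I` is a minimal right ideal: it is a nonzero right ideal and the only right ideals
contained in it are `0` and itself. -/
def IsMinimalRightIdeal (S : ZinbielSuper K Z) (I : Submodule K Z) : Prop :=
  IsRightIdeal S I ∧ I ≠ ⊥ ∧ ∀ J : Submodule K Z, IsRightIdeal S J → J ≤ I → J = ⊥ ∨ J = I

/-! Helper lemmas -/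

namespace ZinbielSuper

section

/-- homogeneous elements -/
def Hom (S : ZinbielSuper K Z) (x : Z) : Prop := x ∈ S.Z0 ∨ x ∈ S.Z1

/-- graded subspaces -/
def Gr (S : ZinbielSuper K Z) (A : Submodule K Z) : Prop :=
  ∀ a ∈ A, ∃ b ∈ A, ∃ c ∈ A, b ∈ S.Z0 ∧ c ∈ S.Z1 ∧ a = b + c

/-- product of subspaces -/
abbrev pr (S : ZinbielSuper K Z) (A B : Submodule K Z) : Submodule K Z :=
  Submodule.map₂ S.mul A B

theorem gr_top (S : ZinbielSuper K Z) : S.Gr ⊤ := by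
  intro a _
  have h : a ∈ S.Z0 ⊔ S.Z1 := by rw [S.compl.sup_eq_top]; trivial
  obtain ⟨b, hb, c, hc, rfl⟩ := Submodule.mem_sup.1 h
  exact ⟨b, trivial, c, trivial, hb, hc, rfl⟩

theorem hom_mul (S : ZinbielSuper K Z) {x y : Z} (hx : S.Hom x) (hy : S.Hom y) :
    S.Hom (S.mul x y) := by
  rcases hx with hx | hx <;> rcases hy with hy | hy
  · exact Or.inl (S.mul00 _ hx _ hy)
  · exact Or.inr (S.mul01 _ hx _ hy)
  · exact Or.inr (S.mul10 _ hx _ hy)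
  · exact Or.inl (S.mul11 _ hx _ hy)

theorem zinb (S : ZinbielSuper K Z) {y z : Z} (hy : S.Hom y) (hz : S.Hom z) :
    ∃ s : K, s * s = 1 ∧
      (∀ x, S.mul (S.mul x y) z = S.mul x (S.mul y z + s • S.mul z y)) ∧
      (∀ x, S.mul (S.mul x z) y = S.mul x (S.mul z y + s • S.mul y z)) := by
  by_cases h : y ∈ S.Z0 ∨ z ∈ S.Z0
  · refine ⟨1, by simp, fun x => ?_, fun x => ?_⟩
    · obtain ⟨b, _, c, _, hb, hc, rfl⟩ := S.gr_top x trivial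
      have h1 := S.zinb_even b y z (Or.inl hb) hy hz h
      have h2 := S.zinb_even c y z (Or.inr hc) hy hz h
      simp only [map_add, LinearMap.add_apply, one_smul] at h1 h2 ⊢
      rw [h1, h2]; abel
    · obtain ⟨b, _, c, _, hb, hc, rfl⟩ := S.gr_top x trivial
      have h1 := S.zinb_even b z y (Or.inl hb) hz hy h.symm
      have h2 := S.zinb_even c z y (Or.inr hc) hz hy h.symm
      simp only [map_add, LinearMap.add_apply, one_smul] at h1 h2 ⊢
      rw [h1, h2]; abel
  · push Not at h
    have hy1 := hy.resolve_left h.1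
    have hz1 := hz.resolve_left h.2
    refine ⟨-1, by simp, fun x => ?_, fun x => ?_⟩
    · obtain ⟨b, _, c, _, hb, hc, rfl⟩ := S.gr_top x trivial
      have h1 := S.zinb_odd b y z (Or.inl hb) hy1 hz1
      have h2 := S.zinb_odd c y z (Or.inr hc) hy1 hz1
      simp only [map_add, map_sub, map_neg, LinearMap.add_apply, neg_smul, one_smul] at h1 h2 ⊢
      rw [h1, h2]; abel
    · obtain ⟨b, _, c, _, hb, hc, rfl⟩ := S.gr_top x trivial
      have h1 := S.zinb_odd b z y (Or.inl hb) hz1 hy1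
      have h2 := S.zinb_odd c z y (Or.inr hc) hz1 hy1
      simp only [map_add, map_sub, map_neg, LinearMap.add_apply, neg_smul, one_smul] at h1 h2 ⊢
      rw [h1, h2]; abel

/-- membership test on homogeneous elements -/
theorem gr_ind (S : ZinbielSuper K Z) {A T : Submodule K Z} (hA : S.Gr A) (f : Z →ₗ[K] Z)
    (h : ∀ a ∈ A, S.Hom a → f a ∈ T) : ∀ a ∈ A, f a ∈ T := by
  intro a ha
  obtain ⟨b, hb, c, hc, hb0, hc1, rfl⟩ := hA a ha
  rw [map_add]
  exact T.add_mem (h b hb (Or.inl hb0)) (h c hc (Or.inr hc1))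

theorem gr_of_span (S : ZinbielSuper K Z) {s : Set Z} (hs : ∀ x ∈ s, S.Hom x) :
    S.Gr (Submodule.span K s) := by
  intro a ha
  induction ha using Submodule.span_induction with
  | mem x hx =>
    rcases hs x hx with h | h
    · exact ⟨x, Submodule.subset_span hx, 0, Submodule.zero_mem _, h, Submodule.zero_mem _, by simp⟩
    · exact ⟨0, Submodule.zero_mem _, x, Submodule.subset_span hx, Submodule.zero_mem _, h, by simp⟩
  | zero => exact ⟨0, Submodule.zero_mem _, 0, Submodule.zero_mem _, Submodule.zero_mem _,
      Submodule.zero_mem _, by simp⟩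
  | add x y _ _ hx hy =>
    obtain ⟨b, hb, c, hc, hb0, hc1, rfl⟩ := hx
    obtain ⟨b', hb', c', hc', hb0', hc1', rfl⟩ := hy
    exact ⟨b + b', add_mem hb hb', c + c', add_mem hc hc', add_mem hb0 hb0', add_mem hc1 hc1',
      by abel⟩
  | smul r x _ hx =>
    obtain ⟨b, hb, c, hc, hb0, hc1, rfl⟩ := hx
    exact ⟨r • b, Submodule.smul_mem _ _ hb, r • c, Submodule.smul_mem _ _ hc,
      Submodule.smul_mem _ _ hb0, Submodule.smul_mem _ _ hc1, by simp⟩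

theorem gr_eq_span (S : ZinbielSuper K Z) {A : Submodule K Z} (hA : S.Gr A) :
    A = Submodule.span K {x | x ∈ A ∧ S.Hom x} := by
  apply le_antisymm
  · exact fun a ha => S.gr_ind hA LinearMap.id
      (T := Submodule.span K {x | x ∈ A ∧ S.Hom x}) (fun a ha hh => Submodule.subset_span (show a ∈ {x | x ∈ A ∧ S.Hom x} from ⟨ha, hh⟩)) a ha
  · exact Submodule.span_le.2 fun x hx => hx.1

theorem gr_pr (S : ZinbielSuper K Z) {A B : Submodule K Z} (hA : S.Gr A) (hB : S.Gr B) :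
    S.Gr (S.pr A B) := by
  rw [S.gr_eq_span hA, S.gr_eq_span hB, pr, Submodule.map₂_span_span]
  apply S.gr_of_span
  rintro _ ⟨a, ha, b, hb, rfl⟩
  exact S.hom_mul ha.2 hb.2

/-- `(AB)C ≤ T` on homogeneous `b, c`. -/
theorem pr_pr_le (S : ZinbielSuper K Z) {A B C T : Submodule K Z} (hB : S.Gr B) (hC : S.Gr C)
    (h : ∀ a ∈ A, ∀ b ∈ B, ∀ c ∈ C, S.Hom b → S.Hom c → S.mul (S.mul a b) c ∈ T) :
    S.pr (S.pr A B) C ≤ T := by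
  rw [Submodule.map₂_le]
  intro d hd c hc
  have : S.pr A B ≤ T.comap (S.mul.flip c) := by
    rw [Submodule.map₂_le]
    intro a ha b hb
    refine S.gr_ind hB (S.mul.flip c ∘ₗ S.mul a) (fun b hb hb' => ?_) b hb
    exact S.gr_ind hC (S.mul (S.mul a b)) (fun c hc hc' => h a ha b hb c hc hb' hc') c hc
  exact this hd

theorem le_pr_pr (S : ZinbielSuper K Z) {A B C T : Submodule K Z} (hB : S.Gr B) (hC : S.Gr C)
    (h : ∀ a ∈ A, ∀ b ∈ B, ∀ c ∈ C, S.Hom b → S.Hom c → S.mul a (S.mul b c) ∈ T) :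
    S.pr A (S.pr B C) ≤ T := by
  rw [Submodule.map₂_le]
  intro a ha d hd
  have : S.pr B C ≤ T.comap (S.mul a) := by
    rw [Submodule.map₂_le]
    intro b hb c hc
    refine S.gr_ind hB (S.mul a ∘ₗ S.mul.flip c) (fun b hb hb' => ?_) b hb
    exact S.gr_ind hC (S.mul a ∘ₗ S.mul b) (fun c hc hc' => h a ha b hb c hc hb' hc') c hc
  exact this hd

theorem rel1 (S : ZinbielSuper K Z) {A B C : Submodule K Z} (hB : S.Gr B) (hC : S.Gr C) :
    S.pr (S.pr A B) C ≤ S.pr A (S.pr B C ⊔ S.pr C B) := by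
  refine S.pr_pr_le hB hC fun a ha b hb c hc hb' hc' => ?_
  obtain ⟨s, _, h, _⟩ := S.zinb hb' hc'
  rw [h]
  exact Submodule.apply_mem_map₂ _ ha (add_mem
    (Submodule.mem_sup_left (Submodule.apply_mem_map₂ _ hb hc))
    (Submodule.mem_sup_right (Submodule.smul_mem _ _ (Submodule.apply_mem_map₂ _ hc hb))))

theorem rel2 (S : ZinbielSuper K Z) {A B C : Submodule K Z} (hB : S.Gr B) (hC : S.Gr C) :
    S.pr A (S.pr B C) ≤ S.pr (S.pr A B) C ⊔ S.pr A (S.pr C B) := by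
  refine S.le_pr_pr hB hC fun a ha b hb c hc hb' hc' => ?_
  obtain ⟨s, _, h, _⟩ := S.zinb hb' hc'
  have : S.mul a (S.mul b c) = S.mul (S.mul a b) c - s • S.mul a (S.mul c b) := by
    rw [h]; simp
  rw [this]
  exact sub_mem (Submodule.mem_sup_left (Submodule.apply_mem_map₂ _
      (Submodule.apply_mem_map₂ _ ha hb) hc))
    (Submodule.mem_sup_right (Submodule.smul_mem _ _ (Submodule.apply_mem_map₂ _ ha
      (Submodule.apply_mem_map₂ _ hc hb))))

theorem rel4 (S : ZinbielSuper K Z) {A B C : Submodule K Z} (hB : S.Gr B) (hC : S.Gr C) :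
    S.pr (S.pr A B) C ≤ S.pr (S.pr A C) B := by
  refine S.pr_pr_le hB hC fun a ha b hb c hc hb' hc' => ?_
  obtain ⟨s, hs, h, h'⟩ := S.zinb hb' hc'
  have : S.mul (S.mul a b) c = s • S.mul (S.mul a c) b := by
    rw [h, h']; simp [smul_smul, hs, add_comm]
  rw [this]
  exact Submodule.smul_mem _ _ (Submodule.apply_mem_map₂ _
      (Submodule.apply_mem_map₂ _ ha hc) hb)

/-- left powers `B, BB, B(BB), …` -/
def lp (S : ZinbielSuper K Z) (B : Submodule K Z) : ℕ → Submodule K Z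
  | 0 => B
  | k + 1 => S.pr B (lp S B k)

theorem gr_lp (S : ZinbielSuper K Z) {B : Submodule K Z} (hB : S.Gr B) (k : ℕ) :
    S.Gr (S.lp B k) := by
  induction k with
  | zero => exact hB
  | succ k ih => exact S.gr_pr hB ih

theorem lp_le (S : ZinbielSuper K Z) {B : Submodule K Z} (hBB : S.pr B B ≤ B) (k : ℕ) :
    S.lp B (k + 1) ≤ S.lp B k := by
  induction k with
  | zero => exact hBB
  | succ k ih => exact Submodule.map₂_le_map₂_right ih

theorem lp_mul_aux (S : ZinbielSuper K Z) {B : Submodule K Z} (hB : S.Gr B) (n : ℕ) :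
    ∀ i j, i + j = n → S.pr (S.lp B i) (S.lp B j) ≤ S.lp B (n + 1) := by
  induction n with
  | zero =>
    intro i j h
    obtain ⟨rfl, rfl⟩ : i = 0 ∧ j = 0 := by omega
    exact le_rfl
  | succ n ih =>
    intro i j h
    rcases i with _ | i
    · obtain rfl : j = n + 1 := by omega
      exact le_rfl
    · refine (S.rel1 (S.gr_lp hB i) (S.gr_lp hB j)).trans ?_
      exact Submodule.map₂_le_map₂_right (sup_le (ih i j (by omega)) (ih j i (by omega)))

theorem lp_mul (S : ZinbielSuper K Z) {B : Submodule K Z} (hB : S.Gr B) (i j : ℕ) :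
    S.pr (S.lp B i) (S.lp B j) ≤ S.lp B (i + j + 1) := S.lp_mul_aux hB _ i j rfl

/-- Left powers of an ideal are stable under right multiplication. -/
theorem lp_right (S : ZinbielSuper K Z) {B I : Submodule K Z} (hB : S.Gr B) (hI : S.Gr I)
    (hIB : S.pr I B ≤ I) (k : ℕ) : S.pr (S.lp I k) B ≤ S.lp I k := by
  induction k with
  | zero => exact hIB
  | succ k ih =>
    refine (S.rel1 (S.gr_lp hI k) hB).trans ?_
    rw [pr, Submodule.map₂_sup_right]
    refine sup_le (Submodule.map₂_le_map₂_right ih) ?_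
    refine (S.rel2 hB (S.gr_lp hI k)).trans (sup_le (Submodule.map₂_le_map₂_left hIB) ?_)
    exact Submodule.map₂_le_map₂_right ih

/-- If `F = FF + B(FF)` for a left nilpotent ideal `F` of `B`, then `F = 0`. -/
theorem ideal_zero (S : ZinbielSuper K Z) {B F : Submodule K Z} (hB : S.Gr B) (hF : S.Gr F)
    (hFB : S.pr F B ≤ F) (h : F ≤ S.pr F F ⊔ S.pr B (S.pr F F)) {n : ℕ} (hn : S.lp F n = ⊥) :
    F = ⊥ := by
  have key : ∀ k, F ≤ S.lp F k ⊔ S.pr B (S.lp F k) := by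
    intro k
    induction k with
    | zero => exact le_sup_left
    | succ k ih =>
      have h2 : S.pr F F ≤ S.lp F (k + 1) := by
        refine (Submodule.map₂_le_map₂_right ih).trans ?_
        rw [Submodule.map₂_sup_right]
        refine sup_le le_rfl ((S.rel2 hB (S.gr_lp hF k)).trans
          (sup_le (Submodule.map₂_le_map₂_left hFB) ?_))
        exact Submodule.map₂_le_map₂_right (S.lp_right hB hF hFB k)
      exact h.trans (sup_le_sup h2 (Submodule.map₂_le_map₂_right h2))
  have := key n
  rw [hn] at this
  simpa [pr] using this

/-- Reduction of long left words. -/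
theorem word_red (S : ZinbielSuper K Z) {B Y T : Submodule K Z} (hB : S.Gr B) (hY : S.Gr Y)
    (N : ℕ) (hT : ∀ i j, N ≤ i + j → S.pr (S.lp B i) (S.pr (S.lp B j) Y) ≤ T) (m : ℕ) :
    ∀ i j, N ≤ i + j + m → (S.pr B)^[m] (S.pr (S.lp B i) (S.pr (S.lp B j) Y)) ≤ T := by
  have mono : ∀ m, Monotone ((S.pr B)^[m]) := fun m =>
    Monotone.iterate (fun _ _ h => Submodule.map₂_le_map₂_right h) m
  have hsup : ∀ m (P Q : Submodule K Z),
      (S.pr B)^[m] (P ⊔ Q) = (S.pr B)^[m] P ⊔ (S.pr B)^[m] Q := by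
    intro m
    induction m with
    | zero => intro P Q; rfl
    | succ m ih =>
      intro P Q
      simp only [Function.iterate_succ_apply]
      rw [pr, Submodule.map₂_sup_right, ih]
  induction m with
  | zero => exact fun i j h => hT i j h
  | succ m ih =>
    intro i j h
    rw [Function.iterate_succ_apply]
    have step : S.pr B (S.pr (S.lp B i) (S.pr (S.lp B j) Y)) ≤
        S.pr (S.lp B (i + 1)) (S.pr (S.lp B j) Y) ⊔
        S.pr (S.lp B 0) (S.pr (S.lp B (j + i + 1)) Y) := by
      refine (S.rel2 (S.gr_lp hB i) (S.gr_pr (S.gr_lp hB j) hY)).trans (sup_le_sup le_rfl ?_)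
      refine Submodule.map₂_le_map₂_right ((S.rel4 hY (S.gr_lp hB i)).trans ?_)
      exact Submodule.map₂_le_map₂_left (S.lp_mul hB j i)
    refine (mono m step).trans ?_
    rw [hsup]
    exact sup_le (ih _ _ (by omega)) (ih _ _ (by omega))

/-! Right nilpotency -/

/-- right multiplication -/
abbrev R (S : ZinbielSuper K Z) : Z →ₗ[K] Module.End K Z := S.mul.flip

theorem R_mul_R (S : ZinbielSuper K Z) {y z : Z} (hy : S.Hom y) (hz : S.Hom z) :
    ∃ s : K, s * s = 1 ∧ S.R z * S.R y = S.R (S.mul y z + s • S.mul z y) ∧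
      S.R z * S.R y = s • (S.R y * S.R z) := by
  obtain ⟨s, hs, h, h'⟩ := S.zinb hy hz
  refine ⟨s, hs, ?_, ?_⟩
  · ext x; exact h x
  · ext x
    change S.mul (S.mul x y) z = s • S.mul (S.mul x z) y
    rw [h, h']; simp [smul_smul, hs, add_comm]

theorem R_even (S : ZinbielSuper K Z) {y z : Z} (hy : y ∈ S.Z0) (hz : z ∈ S.Z0) :
    S.R z * S.R y = S.R (S.mul y z + S.mul z y) := by
  ext x
  obtain ⟨b, _, c, _, hb, hc, rfl⟩ := S.gr_top x trivial
  have h1 := S.zinb_even b y z (Or.inl hb) (Or.inl hy) (Or.inl hz) (Or.inl hy)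
  have h2 := S.zinb_even c y z (Or.inr hc) (Or.inl hy) (Or.inl hz) (Or.inl hy)
  rw [map_add, map_add]
  exact congrArg₂ (· + ·) h1 h2

theorem idem_zero (S : ZinbielSuper K Z) {g : Z} (hg : g ∈ S.Z0) (h : S.R g * S.R g = S.R g) :
    S.R g = 0 := by
  have hh : S.mul g g ∈ S.Z0 := S.mul00 _ hg _ hg
  have e1 : S.R g = (2 : K) • S.R (S.mul g g) := by
    rw [← h, S.R_even hg hg, map_add, two_smul]
  have e2 := S.R_even hh hh
  have e3 : S.mul (S.mul g g) g = S.mul g g := LinearMap.congr_fun h g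
  by_cases h2 : (2 : K) = 0
  · rw [e1, h2, zero_smul]
  · -- `h * h = h / 2`
    have e4 : S.mul g g = (2 : K) • S.mul (S.mul g g) (S.mul g g) := by
      have := LinearMap.congr_fun e1 (S.mul g g)
      change S.mul (S.mul g g) g = (2 : K) • S.mul (S.mul g g) (S.mul g g) at this
      rwa [e3] at this
    have e5 : S.R (S.mul g g) * S.R (S.mul g g) = S.R (S.mul g g) := by
      rw [e2, ← two_smul K, ← e4]
    have e6 : (4 : K) • S.R (S.mul g g) = (2 : K) • S.R (S.mul g g) := by
      rw [← e1, ← h, e1, smul_mul_smul_comm, e5]; norm_num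
    have e7 : (2 : K) • S.R (S.mul g g) = 0 := by
      have : (2 : K) • S.R (S.mul g g) = (4 : K) • S.R (S.mul g g) - (2 : K) • S.R (S.mul g g) := by
        rw [← sub_smul]; norm_num
      rw [this, e6, sub_self]
    rw [e1, e7]

theorem poly_mem (S : ZinbielSuper K Z) {x : Z} (hx : x ∈ S.Z0) (p : Polynomial K) :
    ∃ g ∈ S.Z0, Polynomial.aeval (S.R x) (p * Polynomial.X) = S.R g := by
  have mon : ∀ n : ℕ, ∃ g ∈ S.Z0, S.R x ^ (n + 1) = S.R g := by
    intro n
    induction n with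
    | zero => exact ⟨x, hx, by simp⟩
    | succ n ih =>
      obtain ⟨g, hg, e⟩ := ih
      exact ⟨_, add_mem (S.mul00 _ hx _ hg) (S.mul00 _ hg _ hx), by
        rw [pow_succ, e, S.R_even hx hg]⟩
  induction p using Polynomial.induction_on' with
  | add p q hp hq =>
    obtain ⟨g, hg, e⟩ := hp
    obtain ⟨g', hg', e'⟩ := hq
    exact ⟨g + g', add_mem hg hg', by rw [add_mul, map_add, e, e', map_add]⟩
  | monomial n a =>
    obtain ⟨g, hg, e⟩ := mon n
    refine ⟨a • g, Submodule.smul_mem _ _ hg, ?_⟩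
    rw [Polynomial.monomial_mul_X, Polynomial.aeval_monomial, e, map_smul, Algebra.smul_def]

theorem R_nil_even (S : ZinbielSuper K Z) [FiniteDimensional K Z] {x : Z} (hx : x ∈ S.Z0) :
    IsNilpotent (S.R x) := by
  set f := S.R x with hf
  have h0 : minpoly K f ≠ 0 := minpoly.ne_zero (Algebra.IsIntegral.isIntegral f)
  obtain ⟨q, hq, hnd⟩ := Polynomial.exists_eq_pow_rootMultiplicity_mul_and_not_dvd _ h0 0
  set m := Polynomial.rootMultiplicity 0 (minpoly K f)
  rw [map_zero, sub_zero] at hq hnd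
  have hco : IsCoprime (Polynomial.X ^ (m + 1)) q :=
    (((Polynomial.irreducible_X).coprime_iff_not_dvd).2 hnd).pow_left
  obtain ⟨a, b, hab⟩ := hco
  have hkill : Polynomial.aeval f (Polynomial.X ^ (m + 1) * q) = 0 := by
    have : Polynomial.X ^ (m + 1) * q = Polynomial.X * minpoly K f := by
      rw [hq]; ring
    rw [this, map_mul, minpoly.aeval, mul_zero]
  obtain ⟨g, hg, e⟩ := S.poly_mem hx (a * Polynomial.X ^ m)
  rw [← hf] at e
  have e' : Polynomial.aeval f (a * Polynomial.X ^ (m + 1)) = S.R g := by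
    rw [← e, pow_succ, mul_assoc]
  have hid : S.R g * S.R g = S.R g := by
    rw [← e', ← map_mul]
    have : a * Polynomial.X ^ (m + 1) * (a * Polynomial.X ^ (m + 1)) =
        a * Polynomial.X ^ (m + 1) - a * b * (Polynomial.X ^ (m + 1) * q) := by
      linear_combination (a * Polynomial.X ^ (m + 1)) * hab
    rw [this, map_sub, map_mul _ (a * b), hkill, mul_zero, sub_zero]
  have hz := S.idem_zero hg hid
  refine ⟨m + 1, ?_⟩
  have : (Polynomial.X ^ (m + 1) : Polynomial K) =
      Polynomial.X ^ (m + 1) * (a * Polynomial.X ^ (m + 1)) +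
        b * (Polynomial.X ^ (m + 1) * q) := by
    linear_combination -(Polynomial.X ^ (m + 1)) * hab
  have h3 := congrArg (Polynomial.aeval f) this
  rw [map_add, map_mul, map_mul _ b, hkill, e', hz] at h3
  simpa using h3

theorem R_nil (S : ZinbielSuper K Z) [FiniteDimensional K Z] {x : Z} (hx : S.Hom x) :
    IsNilpotent (S.R x) := by
  rcases hx with hx | hx
  · exact S.R_nil_even hx
  · refine ⟨2, ?_⟩
    ext y
    rw [pow_two]
    obtain ⟨b, _, c, _, hb, hc, rfl⟩ := S.gr_top y trivial
    have h1 := S.zinb_odd b x x (Or.inl hb) hx hx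
    have h2 := S.zinb_odd c x x (Or.inr hc) hx hx
    rw [sub_self, map_zero] at h1 h2
    rw [map_add]
    have : S.mul (S.mul b x) x + S.mul (S.mul c x) x = 0 := by rw [h1, h2, add_zero]
    exact this

theorem R_top_nil (S : ZinbielSuper K Z) [FiniteDimensional K Z] :
    IsNilpotent (Submodule.map S.R ⊤ : Submodule K (Module.End K Z)) := by
  classical
  obtain ⟨s0, h0⟩ := IsNoetherian.noetherian S.Z0
  obtain ⟨s1, h1⟩ := IsNoetherian.noetherian S.Z1
  have hs : ∀ x ∈ s0 ∪ s1, S.Hom x := by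
    intro x hx
    rcases Finset.mem_union.1 hx with hx | hx
    · exact Or.inl (h0 ▸ Submodule.subset_span hx)
    · exact Or.inr (h1 ▸ Submodule.subset_span hx)
  have htop : (⊤ : Submodule K Z) = ⨆ x ∈ s0 ∪ s1, Submodule.span K {x} := by
    rw [← S.compl.sup_eq_top, ← h0, ← h1, ← Submodule.span_union, ← Finset.coe_union,
      Submodule.span_eq_iSup_of_singleton_spans]
    rfl
  have e : (Submodule.map S.R ⊤ : Submodule K (Module.End K Z)) =
      ∑ x ∈ s0 ∪ s1, Submodule.span K {S.R x} := by
    rw [htop, Submodule.map_iSup]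
    simp only [Submodule.map_iSup, Submodule.map_span, Set.image_singleton]
    induction s0 ∪ s1 using Finset.induction_on with
    | empty => simp
    | insert a s ha ih => rw [Finset.iSup_insert, Finset.sum_insert ha, ih]; rfl
  rw [e]
  apply Commute.isNilpotent_sum
  · intro x hx
    obtain ⟨n, hn⟩ := S.R_nil (hs x hx)
    exact ⟨n, by rw [Submodule.span_pow, Set.singleton_pow, hn]; simp⟩
  · intro x y hx hy
    obtain ⟨s, hs1, _, h⟩ := S.R_mul_R (hs y hy) (hs x hx)
    have hu : IsUnit s := IsUnit.of_mul_eq_one s hs1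
    rw [commute_iff_eq, Submodule.span_mul_span, Submodule.span_mul_span,
      Set.singleton_mul_singleton, Set.singleton_mul_singleton, h,
      Submodule.span_singleton_smul_eq hu]

theorem right_nil (S : ZinbielSuper K Z) [FiniteDimensional K Z] {W : Submodule K Z}
    (hW : W ≤ S.pr W ⊤) : W = ⊥ := by
  obtain ⟨n, hn⟩ := S.R_top_nil
  set E : Submodule K (Module.End K Z) := Submodule.map S.R ⊤
  let act : Module.End K Z →ₗ[K] Z →ₗ[K] Z := LinearMap.id
  have key : ∀ n, W ≤ Submodule.map₂ act (E ^ n) W := by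
    intro n
    induction n with
    | zero =>
      intro w hw
      have : act 1 w ∈ Submodule.map₂ act (E ^ 0) W :=
        Submodule.apply_mem_map₂ _ (by rw [pow_zero]; exact Submodule.one_le.1 le_rfl) hw
      exact this
    | succ n ih =>
      refine hW.trans ?_
      rw [Submodule.map₂_le]
      intro w hw z _
      have : Submodule.map₂ act (E ^ n) W ≤
          (Submodule.map₂ act (E ^ (n + 1)) W).comap (S.R z) := by
        rw [Submodule.map₂_le]
        intro f hf v hv
        have : act (S.R z * f) v ∈ Submodule.map₂ act (E ^ (n + 1)) W := by
          refine Submodule.apply_mem_map₂ _ ?_ hv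
          rw [pow_succ']
          exact Submodule.mul_mem_mul (Submodule.mem_map_of_mem trivial) hf
        exact this
      exact this (ih hw)
  have := key n
  rw [hn] at this
  simpa using this

/-- Every graded subalgebra is left nilpotent. -/
theorem left_nil (S : ZinbielSuper K Z) [FiniteDimensional K Z] (d : ℕ) :
    ∀ B : Submodule K Z, finrank K B = d → S.Gr B → S.pr B B ≤ B → ∃ n, S.lp B n = ⊥ := by
  induction d using Nat.strong_induction_on with
  | _ d ih =>
  intro B hd hB hBB
  have hanti : Antitone (S.lp B) := antitone_nat_of_succ_le (S.lp_le hBB)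
  obtain ⟨N, hN⟩ := IsArtinian.monotone_stabilizes
    (⟨fun k => OrderDual.toDual (S.lp B k), fun _ _ h => hanti h⟩ : ℕ →o (Submodule K Z)ᵒᵈ)
  have hN' : ∀ k, N ≤ k → S.lp B N = S.lp B k := hN
  refine ⟨N, ?_⟩
  set F := S.lp B N with hFdef
  have hF : S.Gr F := S.gr_lp hB N
  have hFle : F ≤ B := hanti (Nat.zero_le N)
  have hBF : S.pr B F = F := (hN' (N + 1) (by omega)).symm
  have hFB : S.pr F B ≤ F := S.lp_right hB hB hBB N
  have hFF : S.pr F F ≤ F := (Submodule.map₂_le_map₂_right hFle).trans hFB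
  by_cases hFeq : F = B
  · rw [hFeq]
    rw [hFeq] at hBF
    apply S.right_nil
    conv_lhs => rw [← hBF]
    exact Submodule.map₂_le_map₂_right le_top
  · have hlt : finrank K F < d := by
      rw [← hd]; exact Submodule.finrank_lt_finrank_of_lt (lt_of_le_of_ne hFle hFeq)
    obtain ⟨n, hn⟩ := ih _ hlt F rfl hF hFF
    refine S.ideal_zero hB hF hFB ?_ hn
    have hlpF : ∀ j, S.pr (S.lp B j) F ≤ F := fun j =>
      (Submodule.map₂_le_map₂_left (hanti (Nat.zero_le j))).trans hBF.le
    have hred := S.word_red hB hF (T := S.pr F F ⊔ S.pr B (S.pr F F)) (2 * N) (by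
      intro i j hij
      by_cases hi : N ≤ i
      · rw [← hN' i hi]
        exact le_sup_of_le_left (Submodule.map₂_le_map₂_right (hlpF j))
      · rw [← hN' j (by omega)]
        exact le_sup_of_le_right
          (Submodule.map₂_le_map₂_left (hanti (Nat.zero_le i)))) (2 * N) 0 0 (by omega)
    have hfix : (S.pr B)^[2 * N] (S.pr (S.lp B 0) (S.pr (S.lp B 0) F)) = F := by
      change (S.pr B)^[2 * N] (S.pr B (S.pr B F)) = F
      rw [hBF, hBF]
      exact Function.iterate_fixed hBF _
    rwa [hfix] at hred

end

end ZinbielSuper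

/-- A minimal ideal `I` of a finite-dimensional Zinbiel superalgebra satisfies
`I·Z = Z·I = 0` and `dim I = 1`. -/
theorem minimalIdeal_ann_dim_one (K : Type*) [Field K] (Z : Type*)
    [AddCommGroup Z] [Module K Z] [FiniteDimensional K Z] (S : ZinbielSuper K Z)
    (I : Submodule K Z) (hI : IsMinimalIdeal S I) :
    (∀ a ∈ I, ∀ x : Z, S.mul a x = 0 ∧ S.mul x a = 0) ∧ finrank K I = 1 := by
  obtain ⟨hid, hne, hmin⟩ := hI
  have hJle : S.pr ⊤ I ⊔ S.pr I ⊤ ≤ I := sup_le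
    (Submodule.map₂_le.2 fun x _ a ha => (hid x a ha).1)
    (Submodule.map₂_le.2 fun a ha x _ => (hid x a ha).2)
  have hJ : IsIdeal S (S.pr ⊤ I ⊔ S.pr I ⊤) := fun x a ha =>
    ⟨Submodule.mem_sup_left (Submodule.apply_mem_map₂ _ trivial (hJle ha)),
      Submodule.mem_sup_right (Submodule.apply_mem_map₂ _ (hJle ha) trivial)⟩
  have hzero : S.pr ⊤ I ⊔ S.pr I ⊤ = ⊥ := by
    refine (hmin _ hJ hJle).resolve_right fun hEq => hne ?_
    obtain ⟨n, hn⟩ := S.left_nil _ ⊤ rfl S.gr_top le_top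
    have key : ∀ k, I ≤ S.lp ⊤ k := by
      intro k
      induction k with
      | zero => exact le_top
      | succ k ih =>
        rw [← hEq]
        exact sup_le (Submodule.map₂_le_map₂_right ih)
          ((Submodule.map₂_le_map₂_left ih).trans (S.lp_mul S.gr_top k 0))
    exact le_bot_iff.1 (hn ▸ key n)
  have hann : ∀ a ∈ I, ∀ x : Z, S.mul a x = 0 ∧ S.mul x a = 0 := by
    intro a ha x
    refine ⟨(Submodule.mem_bot K).1 ?_, (Submodule.mem_bot K).1 ?_⟩
    · rw [← hzero]
      exact Submodule.mem_sup_right (Submodule.apply_mem_map₂ _ ha trivial)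
    · rw [← hzero]
      exact Submodule.mem_sup_left (Submodule.apply_mem_map₂ _ trivial ha)
  refine ⟨hann, ?_⟩
  obtain ⟨a, ha, ha0⟩ := Submodule.exists_mem_ne_zero_of_ne_bot hne
  have hle : Submodule.span K {a} ≤ I := by
    rw [Submodule.span_singleton_le_iff_mem]; exact ha
  have hsp : IsIdeal S (Submodule.span K {a}) := fun x b hb => by
    rw [(hann b (hle hb) x).1, (hann b (hle hb) x).2]
    exact ⟨zero_mem _, zero_mem _⟩
  have hEq := (hmin _ hsp hle).resolve_left (by simpa using ha0)
  rw [← hEq]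
  exact finrank_span_singleton ha0
end

section
/- Let Z = Z₀ ⊕ Z₁ be a nonzero n-dimensional Zinbiel superalgebra over ℂ with dim Z₁ = 1 whose even part Z₀ has identically zero multiplication, and suppose the multiplication of Z is not identically zero. Then Z is isomorphic to the superalgebra with even basis e₁, …, e_{n−1}, odd basis f₁, and the only nonzero product of basis elements f₁·f₁ = e₁. -/
open Module Submodule

variable {K : Type*} [Field K] {Z : Type*} [AddCommGroup Z] [Module K Z]

/-- From a basis `b` of a subspace `W` indexed by `Fin n`, the family of elements of `Z`
indexed by `1 ≤ t ≤ n`, with the convention that out-of-range indices give `0`. -/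
noncomputable def sB {n : ℕ} {W : Submodule K Z} (b : Basis (Fin n) K W) : ℕ → Z :=
  fun t => if h : 1 ≤ t ∧ t ≤ n then ((b ⟨t - 1, by omega⟩ : W) : Z) else 0

theorem exists_basis_first {V : Type*} [AddCommGroup V] [Module ℂ V] [FiniteDimensional ℂ V]
    {n : ℕ} (hn : finrank ℂ V = n) (h0 : 0 < n) (v : V) (hv : v ≠ 0) :
    ∃ b : Basis (Fin n) ℂ V, b ⟨0, h0⟩ = v := by
  have hli : LinearIndepOn ℂ id ({v} : Set V) := LinearIndepOn.singleton hv
  let B := Basis.extend hli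
  have : Fintype (hli.extend (Set.subset_univ _)) := FiniteDimensional.fintypeBasisIndex B
  have hc : Fintype.card (hli.extend (Set.subset_univ _)) = n := by
    rw [← hn, finrank_eq_card_basis B]
  let e := Fintype.equivFinOfCardEq hc
  let i : hli.extend (Set.subset_univ _) := ⟨v, hli.subset_extend _ rfl⟩
  refine ⟨B.reindex (e.trans (Equiv.swap (e i) ⟨0, h0⟩)), ?_⟩
  have : (e.trans (Equiv.swap (e i) ⟨0, h0⟩)).symm ⟨0, h0⟩ = i := by
    rw [Equiv.symm_apply_eq]; simp
  rw [Basis.reindex_apply, this]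
  exact Basis.extend_apply_self hli i

/-- A nonzero `n`-dimensional complex Zinbiel superalgebra of type `(n−1, 1)` with zero
even multiplication and nonzero multiplication is isomorphic to the superalgebra with
even basis `e₁, …, e_{n−1}`, odd basis `f₁`, and only nonzero product `f₁·f₁ = e₁`. -/
theorem type_n1_1_zero_even_classification
    {Z : Type*} [AddCommGroup Z] [Module ℂ Z] [FiniteDimensional ℂ Z]
    (S : ZinbielSuper ℂ Z)
    (h1 : finrank ℂ S.Z1 = 1)
    (h00 : ∀ x ∈ S.Z0, ∀ y ∈ S.Z0, S.mul x y = 0)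
    (hne : ∃ a b : Z, S.mul a b ≠ 0) :
    ∃ (b0 : Basis (Fin (finrank ℂ Z - 1)) ℂ S.Z0) (b1 : Basis (Fin 1) ℂ S.Z1),
      S.mul (b1 0 : Z) (b1 0 : Z) = sB b0 1 ∧
      (∀ i j : ℕ, 1 ≤ i → i ≤ finrank ℂ Z - 1 → 1 ≤ j → j ≤ finrank ℂ Z - 1 →
        S.mul (sB b0 i) (sB b0 j) = 0) ∧
      (∀ i : ℕ, 1 ≤ i → i ≤ finrank ℂ Z - 1 →
        S.mul (sB b0 i) (b1 0 : Z) = 0 ∧ S.mul (b1 0 : Z) (sB b0 i) = 0) := by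
  obtain ⟨b1⟩ : Nonempty (Basis (Fin 1) ℂ S.Z1) := ⟨finBasisOfFinrankEq ℂ S.Z1 h1⟩
  obtain ⟨f, hf⟩ : ∃ f : Z, f = (b1 0 : Z) := ⟨_, rfl⟩
  have hf1 : f ∈ S.Z1 := hf ▸ (b1 0).2
  have hf0 : f ≠ 0 := by
    rw [hf]
    exact fun h => b1.ne_zero 0 (Subtype.ext h)
  have hspan : ∀ y ∈ S.Z1, ∃ c : ℂ, y = c • f := by
    intro y hy
    refine ⟨b1.repr ⟨y, hy⟩ 0, ?_⟩
    have := congrArg (Subtype.val) (b1.sum_repr ⟨y, hy⟩)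
    rw [hf]
    simpa using this.symm
  have hfe : ∀ e ∈ S.Z0, S.mul f e = 0 := by
    intro e he
    obtain ⟨c, hc⟩ := hspan _ (S.mul10 f hf1 e he)
    have h := S.zinb_even f e e (Or.inr hf1) (Or.inl he) (Or.inl he) (Or.inl he)
    rw [h00 e he e he, hc] at h
    simp [hc, hf0] at h
    simp [hc, h]
  have hef : ∀ e ∈ S.Z0, S.mul e f = 0 := by
    intro e he
    obtain ⟨c, hc⟩ := hspan _ (S.mul01 e he f hf1)
    have h := S.zinb_even e e f (Or.inl he) (Or.inl he) (Or.inr hf1) (Or.inl he)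
    rw [h00 e he e he, hfe e he, hc] at h
    have h := h.symm
    simp [hc, hf0] at h
    simp [hc, h]
  have hff : S.mul f f ≠ 0 := by
    intro h
    obtain ⟨a, b, hab⟩ := hne
    have hdec : ∀ x : Z, ∃ u ∈ S.Z0, ∃ c : ℂ, x = u + c • f := by
      intro x
      have hx : x ∈ S.Z0 ⊔ S.Z1 := by rw [S.compl.sup_eq_top]; trivial
      obtain ⟨u, hu, w, hw, rfl⟩ := Submodule.mem_sup.1 hx
      obtain ⟨c, rfl⟩ := hspan w hw
      exact ⟨u, hu, c, rfl⟩
    obtain ⟨u, hu, c, rfl⟩ := hdec a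
    obtain ⟨w, hw, d, rfl⟩ := hdec b
    apply hab
    simp [h00 u hu w hw, hef u hu, hfe w hw, h]
  have hv0 := S.mul11 f hf1 f hf1
  have hdim : finrank ℂ S.Z0 = finrank ℂ Z - 1 := by
    have := Submodule.finrank_add_eq_of_isCompl S.compl
    omega
  have hvne : (⟨S.mul f f, hv0⟩ : S.Z0) ≠ 0 := fun h => hff (congrArg Subtype.val h)
  have hpos : 0 < finrank ℂ Z - 1 := by
    rw [← hdim]
    exact finrank_pos_iff_exists_ne_zero.2 ⟨_, hvne⟩
  obtain ⟨b0, hb0⟩ := exists_basis_first hdim hpos _ hvne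
  have hmem : ∀ i, sB b0 i ∈ S.Z0 := by
    intro i
    unfold sB
    split_ifs
    · exact Subtype.mem _
    · exact S.Z0.zero_mem
  refine ⟨b0, b1, ?_, fun i j _ _ _ _ => h00 _ (hmem i) _ (hmem j), fun i _ _ => ?_⟩
  · rw [← hf]
    have h : 1 ≤ 1 ∧ 1 ≤ finrank ℂ Z - 1 := ⟨le_refl _, hpos⟩
    unfold sB
    rw [dif_pos h]
    exact (congrArg Subtype.val hb0).symm
  · rw [← hf]
    exact ⟨hef _ (hmem i), hfe _ (hmem i)⟩
end
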